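/- Let α > -1, 0 < t ≤ 2, b ≠ 0, and n ≥ 2. Define S_n(x) = L_n^α(x) + b·L_{n-1}^{α+t}(x). If x and x' are consecutive zeros of L_n^α, then S_n(x)·S_n(x') < 0; hence the zeros of S_n interlace with the zeros of L_n^α. -/

import Mathlib

open Finset

/-- Generalized Laguerre polynomial `L_n^α(x) = ∑_{k=0}^n (-1)^k C(n+α, n-k) x^k / k!`,
where `C(n+α, n-k) = (∏_{i=1}^{n-k} (α+k+i)) / (n-k)!`. -/
noncomputable def laguerre (α : ℝ) (n : ℕ) (x : ℝ) : ℝ :=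
  ∑ k ∈ Finset.range (n + 1),
    (-1 : ℝ) ^ k * (∏ i ∈ Finset.range (n - k), (α + k + 1 + i)) /
      ((Nat.factorial (n - k) : ℝ) * (Nat.factorial k : ℝ)) * x ^ k

section

open Polynomial

/-- The coefficient of `x ^ k` in `L_n^α`. -/
noncomputable def laguerreCoeff (α : ℝ) (n k : ℕ) : ℝ :=
  if k ≤ n then (-1 : ℝ) ^ k * (∏ i ∈ Finset.range (n - k), (α + k + 1 + i)) /
      ((Nat.factorial (n - k) : ℝ) * (Nat.factorial k : ℝ)) else 0

/-- `L_n^α` as a polynomial. -/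
noncomputable def laguerrePoly (α : ℝ) (n : ℕ) : ℝ[X] :=
  ∑ k ∈ Finset.range (n + 1), monomial k (laguerreCoeff α n k)

theorem coeff_laguerrePoly (α : ℝ) (n k : ℕ) :
    (laguerrePoly α n).coeff k = laguerreCoeff α n k := by
  simp only [laguerrePoly, finsetSum_coeff, coeff_monomial, Finset.sum_ite_eq', Finset.mem_range]
  split_ifs with h
  · rfl
  · rw [laguerreCoeff, if_neg (by omega)]

theorem eval_laguerrePoly (α : ℝ) (n : ℕ) (x : ℝ) :
    (laguerrePoly α n).eval x = laguerre α n x := by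
  simp only [laguerrePoly, eval_finsetSum, eval_monomial, laguerre]
  refine Finset.sum_congr rfl fun k hk => ?_
  rw [laguerreCoeff, if_pos (by simpa [Nat.lt_succ_iff] using hk)]

theorem laguerreCoeff_add (α : ℝ) (k j : ℕ) : laguerreCoeff α (k + j) k =
    (-1 : ℝ) ^ k * (∏ i ∈ Finset.range j, (α + k + 1 + i)) /
      ((Nat.factorial j : ℝ) * (Nat.factorial k : ℝ)) := by
  rw [laguerreCoeff, if_pos (by omega), Nat.add_sub_cancel_left]

theorem laguerreCoeff_of_lt (α : ℝ) {n k : ℕ} (h : n < k) : laguerreCoeff α n k = 0 := by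
  rw [laguerreCoeff, if_neg (by omega)]

theorem laguerreCoeff_shift (α : ℝ) (n k : ℕ) :
    laguerreCoeff (α + 1) (n + 1) k =
      laguerreCoeff α (n + 1) k + laguerreCoeff (α + 1) n k := by
  rcases lt_trichotomy k (n + 1) with h | h | h
  · obtain ⟨j, rfl⟩ := Nat.exists_eq_add_of_le (Nat.lt_succ_iff.1 h)
    rw [add_assoc, laguerreCoeff_add, laguerreCoeff_add, laguerreCoeff_add,
      Finset.prod_range_succ, Finset.prod_range_succ', Nat.factorial_succ]
    have : ∏ i ∈ Finset.range j, (α + k + 1 + ((i + 1 : ℕ) : ℝ))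
        = ∏ i ∈ Finset.range j, (α + 1 + k + 1 + i) :=
      Finset.prod_congr rfl fun i _ => by push_cast; ring
    rw [this]
    have := Nat.cast_ne_zero (R := ℝ).2 (Nat.factorial_ne_zero j)
    have := Nat.cast_ne_zero (R := ℝ).2 (Nat.factorial_ne_zero k)
    push_cast
    field_simp
    ring
  · subst h
    rw [laguerreCoeff_of_lt _ (Nat.lt_succ_self n)]
    have h1 := laguerreCoeff_add α (n + 1) 0
    have h2 := laguerreCoeff_add (α + 1) (n + 1) 0
    simp only [add_zero, Finset.range_zero, Finset.prod_empty] at h1 h2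
    rw [h1, h2, add_zero]
  · rw [laguerreCoeff_of_lt _ h, laguerreCoeff_of_lt _ h, laguerreCoeff_of_lt _ (by omega), add_zero]

theorem laguerreCoeff_succ_left (α : ℝ) (n k : ℕ) :
    ((n : ℝ) + 1 - k) * laguerreCoeff α (n + 1) k = (n + 1 + α) * laguerreCoeff α n k := by
  rcases lt_trichotomy k (n + 1) with h | h | h
  · obtain ⟨j, rfl⟩ := Nat.exists_eq_add_of_le (Nat.lt_succ_iff.1 h)
    rw [add_assoc, laguerreCoeff_add, laguerreCoeff_add, Finset.prod_range_succ,
      Nat.factorial_succ]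
    have := Nat.cast_ne_zero (R := ℝ).2 (Nat.factorial_ne_zero j)
    have := Nat.cast_ne_zero (R := ℝ).2 (Nat.factorial_ne_zero k)
    push_cast
    field_simp
    ring
  · subst h
    rw [laguerreCoeff_of_lt _ (Nat.lt_succ_self n)]
    push_cast
    ring
  · rw [laguerreCoeff_of_lt _ h, laguerreCoeff_of_lt _ (by omega)]
    ring

theorem laguerreCoeff_succ_succ (α : ℝ) (n k : ℕ) :
    laguerreCoeff α (n + 1) (k + 1) * (k + 1) = -laguerreCoeff (α + 1) n k := by
  rcases le_or_gt k n with h | h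
  · obtain ⟨j, rfl⟩ := Nat.exists_eq_add_of_le h
    rw [add_right_comm, laguerreCoeff_add, laguerreCoeff_add, Nat.factorial_succ]
    have : ∏ i ∈ Finset.range j, (α + ((k + 1 : ℕ) : ℝ) + 1 + i)
        = ∏ i ∈ Finset.range j, (α + 1 + k + 1 + i) :=
      Finset.prod_congr rfl fun i _ => by push_cast; ring
    rw [this]
    have := Nat.cast_ne_zero (R := ℝ).2 (Nat.factorial_ne_zero j)
    have := Nat.cast_ne_zero (R := ℝ).2 (Nat.factorial_ne_zero k)
    push_cast
    field_simp
    ring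
  · rw [laguerreCoeff_of_lt _ h, laguerreCoeff_of_lt _ (by omega)]
    ring

theorem laguerrePoly_shift (α : ℝ) (n : ℕ) :
    laguerrePoly (α + 1) (n + 1) = laguerrePoly α (n + 1) + laguerrePoly (α + 1) n := by
  ext k
  simp only [coeff_add, coeff_laguerrePoly, laguerreCoeff_shift]

theorem derivative_laguerrePoly (α : ℝ) (n : ℕ) :
    derivative (laguerrePoly α (n + 1)) = -laguerrePoly (α + 1) n := by
  ext k
  simp only [coeff_derivative, coeff_neg, coeff_laguerrePoly, laguerreCoeff_succ_succ]

theorem laguerrePoly_succ (α : ℝ) (n : ℕ) :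
    C ((n : ℝ) + 1) * laguerrePoly α (n + 1) =
      C (n + 1 + α) * laguerrePoly α n - X * laguerrePoly (α + 1) n := by
  ext k
  rw [coeff_sub, coeff_C_mul, coeff_C_mul, coeff_laguerrePoly, coeff_laguerrePoly,
    ← laguerreCoeff_succ_left]
  rcases k with _ | k
  · simp
  · rw [coeff_X_mul, coeff_laguerrePoly]
    have := laguerreCoeff_succ_succ α n k
    push_cast
    linarith

theorem laguerrePoly_add_two (α : ℝ) (n : ℕ) :
    C ((n : ℝ) + 2) * laguerrePoly α (n + 2) =
      (C (2 * n + 3 + α) - X) * laguerrePoly α (n + 1) - C (n + 1 + α) * laguerrePoly α n := by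
  have h1 := laguerrePoly_succ α (n + 1)
  have h2 := laguerrePoly_succ α n
  have h3 := laguerrePoly_shift α n
  simp only [map_add, map_mul, Nat.cast_add, Nat.cast_one, map_one] at h1 h2 ⊢
  have e2 : (C 2 : ℝ[X]) = 2 := rfl
  have e3 : (C 3 : ℝ[X]) = 3 := rfl
  rw [e2, e3]
  linear_combination h1 - X * h3 - h2

theorem laguerrePoly_zero (α : ℝ) : laguerrePoly α 0 = 1 := by
  simp [laguerrePoly, laguerreCoeff]

theorem laguerrePoly_one (α : ℝ) : laguerrePoly α 1 = C (α + 1) - X := by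
  have h := laguerrePoly_succ α 0
  simpa [laguerrePoly_zero, add_comm] using h

theorem laguerre_pos_of_nonpos {α : ℝ} (hα : -1 < α) (n : ℕ) {x : ℝ} (hx : x ≤ 0) :
    0 < laguerre α n x := by
  have key : ∀ k j : ℕ, 0 < ∏ i ∈ Finset.range j, (α + k + 1 + i) := fun k j =>
    Finset.prod_pos fun i _ => by
      have := Nat.cast_nonneg (α := ℝ) k
      have := Nat.cast_nonneg (α := ℝ) i
      linarith
  have hterm : ∀ k : ℕ, (-1 : ℝ) ^ k * (∏ i ∈ Finset.range (n - k), (α + k + 1 + i)) /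
      ((Nat.factorial (n - k) : ℝ) * (Nat.factorial k : ℝ)) * x ^ k =
      (∏ i ∈ Finset.range (n - k), (α + k + 1 + i)) /
      ((Nat.factorial (n - k) : ℝ) * (Nat.factorial k : ℝ)) * (-x) ^ k := fun k => by
    rw [neg_pow x k]; ring
  rw [laguerre]
  simp only [hterm]
  refine Finset.sum_pos' (fun k _ => ?_) ⟨0, by simp, ?_⟩
  · have := key k (n - k)
    have : 0 ≤ -x := by linarith
    positivity
  · have := key 0 (n - 0)
    rw [pow_zero]
    positivity

theorem exists_root_Ioc {f : ℝ[X]} {a b : ℝ} (hab : a < b) (ha : f.eval a = 0)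
    (hd : 0 < f.derivative.eval a) (hb : f.eval b ≤ 0) : ∃ z ∈ Set.Ioc a b, f.eval z = 0 := by
  have hs := (hasDerivAt_iff_tendsto_slope.1 (f.hasDerivAt a)).eventually (lt_mem_nhds hd)
  have hs' := hs.filter_mono (nhdsWithin_mono a (fun y (hy : y ∈ Set.Ioi a) => (Set.mem_Ioi.1 hy).ne'))
  obtain ⟨c, hc, hac, hcb⟩ := (hs'.and (Ioo_mem_nhdsGT hab)).exists
  have hc0 : 0 < f.eval c := by
    rw [slope_def_field, ha, sub_zero] at hc
    exact (div_pos_iff_of_pos_right (sub_pos.2 hac)).1 hc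
  obtain ⟨z, hz, hz0⟩ := intermediate_value_Icc' hcb.le f.continuous.continuousOn ⟨hb, hc0.le⟩
  exact ⟨z, ⟨hac.trans_le hz.1, hz.2⟩, hz0⟩

theorem exists_root_Ico {f : ℝ[X]} {a b : ℝ} (hab : a < b) (hb : f.eval b = 0)
    (hd : 0 < f.derivative.eval b) (ha : 0 ≤ f.eval a) : ∃ z ∈ Set.Ico a b, f.eval z = 0 := by
  obtain ⟨z, hz, hz0⟩ := exists_root_Ioc (f := -f.comp (-X)) (neg_lt_neg hab)
    (by simp [hb]) (by simpa [derivative_comp] using hd) (by simpa using ha)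
  exact ⟨-z, ⟨by linarith [hz.2], by linarith [hz.1]⟩, by simpa using hz0⟩

/-- At consecutive simple roots, the derivative has opposite signs. -/
theorem derivative_mul_derivative_neg {f : ℝ[X]} {a b : ℝ} (hab : a < b) (ha : f.eval a = 0)
    (hb : f.eval b = 0) (hda : f.derivative.eval a ≠ 0) (hdb : f.derivative.eval b ≠ 0)
    (h : ∀ z ∈ Set.Ioo a b, f.eval z ≠ 0) :
    f.derivative.eval a * f.derivative.eval b < 0 := by
  wlog hpos : 0 < f.derivative.eval a generalizing f
  · have := this (f := -f) (by simpa) (by simpa) (by simpa) (by simpa) (by simpa using h)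
      (by simpa using lt_of_le_of_ne (not_lt.1 hpos) hda)
    simpa using this
  refine mul_neg_of_pos_of_neg hpos (lt_of_le_of_ne (not_lt.1 fun hposb => ?_) hdb)
  have hm1 : a < (a + b) / 2 := by linarith
  have hm2 : (a + b) / 2 < b := by linarith
  rcases le_total (f.eval ((a + b) / 2)) 0 with h0 | h0
  · obtain ⟨z, hz, hz0⟩ := exists_root_Ioc hm1 ha hpos h0
    exact h z ⟨hz.1, hz.2.trans_lt hm2⟩ hz0
  · obtain ⟨z, hz, hz0⟩ := exists_root_Ico hm2 hb hposb h0
    exact h z ⟨hm1.trans_le hz.1, hz.2⟩ hz0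

/-- If `f' z` and `f (z + 1)` have the same strict sign at all roots `z` of `f`, then distinct roots
of `f` are more than `1` apart. -/
theorem add_one_lt_of_roots {f : ℝ[X]}
    (h : ∀ z, f.eval z = 0 → 0 < f.derivative.eval z * f.eval (z + 1)) {y₁ y₂ : ℝ}
    (h₁ : f.eval y₁ = 0) (h₂ : f.eval y₂ = 0) (hlt : y₁ < y₂) : y₁ + 1 < y₂ := by
  by_contra! hle
  have hf : f ≠ 0 := by
    rintro rfl
    simpa using h 0
  classical
  set Z := f.roots.toFinset.filter fun z => ∃ w, z < w ∧ w ≤ z + 1 ∧ f.eval w = 0 with hZ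
  have hmem : ∀ z, z ∈ Z ↔ f.eval z = 0 ∧ ∃ w, z < w ∧ w ≤ z + 1 ∧ f.eval w = 0 := fun z => by
    simp [hZ, hf]
  have hne : Z.Nonempty := ⟨y₁, (hmem _).2 ⟨h₁, y₂, hlt, hle, h₂⟩⟩
  obtain ⟨a, haZ, hmax⟩ := Z.exists_max_image id hne
  obtain ⟨ha, b, hab, hba, hb⟩ := (hmem a).1 haZ
  have hba' : b < a + 1 := by
    refine lt_of_le_of_ne hba ?_
    rintro rfl
    simpa [hb] using h a ha
  have hgap : ∀ z w, a < z → z < w → w ≤ z + 1 → f.eval z = 0 → f.eval w ≠ 0 :=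
    fun z w haz hzw hwz hz hw =>
      absurd (hmax z ((hmem z).2 ⟨hz, w, hzw, hwz, hw⟩)) (not_le.2 haz)
  have hda : f.derivative.eval a ≠ 0 := left_ne_zero_of_mul (h a ha).ne'
  have hdb : f.derivative.eval b ≠ 0 := left_ne_zero_of_mul (h b hb).ne'
  have hneg := derivative_mul_derivative_neg hab ha hb hda hdb fun z hz hz0 =>
    hgap z b hz.1 hz.2 (by linarith [hz.1]) hz0 hb
  have hpos := h a ha
  rcases hdb.lt_or_gt with hdb | hdb
  · have h1 : 0 < f.eval (a + 1) := by
      have := pos_of_mul_neg_left hneg hdb.le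
      exact pos_of_mul_pos_right hpos this.le
    obtain ⟨z, hz, hz0⟩ := exists_root_Ioc (f := -f) hba' (by simpa) (by simpa) (by simpa using h1.le)
    exact hgap b z hab hz.1 (by linarith [hz.2]) hb (by simpa using hz0)
  · have h1 : f.eval (a + 1) < 0 := by
      by_contra! h1
      nlinarith
    obtain ⟨z, hz, hz0⟩ := exists_root_Ioc hba' hb hdb h1.le
    exact hgap b z hab hz.1 (by linarith [hz.2]) hb hz0

theorem eval_pos_of_mem_Icc {f : ℝ[X]}
    (h : ∀ z, f.eval z = 0 → 0 < f.derivative.eval z * f.eval (z + 1)) {a s : ℝ}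
    (ha : 0 < f.eval a) (ha' : 0 < f.eval (a + 1)) (has : a ≤ s) (hsa : s ≤ a + 1) :
    0 < f.eval s := by
  have no_pair : ∀ z w, a ≤ z → z < w → w ≤ a + 1 → f.eval z = 0 → f.eval w ≠ 0 :=
    fun z w haz hzw hwa hz hw => by linarith [add_one_lt_of_roots h hz hw hzw]
  have has' : a < s ∨ a = s := has.lt_or_eq
  rcases has' with has' | rfl
  swap
  · exact ha
  rcases hsa.lt_or_eq with hsa' | rfl
  swap
  · exact ha'
  by_contra! hs
  rcases hs.lt_or_eq with hs | hs
  · obtain ⟨z, hz, hz0⟩ :=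
      intermediate_value_Icc' has f.continuous.continuousOn ⟨hs.le, ha.le⟩
    obtain ⟨w, hw, hw0⟩ :=
      intermediate_value_Icc hsa f.continuous.continuousOn ⟨hs.le, ha'.le⟩
    have hzs : z ≠ s := by rintro rfl; exact hs.ne hz0
    exact no_pair z w hz.1 ((lt_of_le_of_ne hz.2 hzs).trans_le hw.1) hw.2 hz0 hw0
  · rcases (left_ne_zero_of_mul (h s hs).ne').lt_or_gt with hd | hd
    · obtain ⟨z, hz, hz0⟩ :=
        exists_root_Ioc (f := -f) hsa' (by simpa) (by simpa) (by simpa using ha'.le)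
      exact no_pair s z has hz.1 hz.2 hs (by simpa using hz0)
    · obtain ⟨z, hz, hz0⟩ := exists_root_Ico has' hs hd ha.le
      exact no_pair z s hz.1 hz.2 hsa hz0 hs

/-- The Charlier polynomials, up to normalization: as a function of `α`, the value `L_n^α(x)` is
`charlier x n` at `α + n`. -/
noncomputable def charlier (x : ℝ) : ℕ → ℝ[X]
  | 0 => 1
  | 1 => X - C x
  | n + 2 => C ((n : ℝ) + 2)⁻¹ *
      ((X - C (x + n + 1)) * charlier x (n + 1) - C x * charlier x n)

theorem charlier_add_two (x : ℝ) (n : ℕ) : C ((n : ℝ) + 2) * charlier x (n + 2) =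
    (X - C (x + n + 1)) * charlier x (n + 1) - C x * charlier x n := by
  rw [charlier, ← mul_assoc, ← C_mul, mul_inv_cancel₀ (by positivity), C_1, one_mul]

theorem eval_charlier (x α : ℝ) (n : ℕ) :
    (charlier x n).eval (α + n) = (laguerrePoly α n).eval x := by
  induction n using Nat.twoStepInduction generalizing α with
  | zero => simp [charlier, laguerrePoly_zero]
  | one => simp [charlier, laguerrePoly_one]
  | more n ih0 ih1 =>
    have h := congrArg (eval (α + (n + 2 : ℕ))) (charlier_add_two x n)
    have h0 := ih0 (α + 2)
    have h1 := ih1 (α + 1)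
    have e0 : α + 2 + n = α + (n + 2 : ℕ) := by push_cast; ring
    have e1 : α + 1 + (n + 1 : ℕ) = α + (n + 2 : ℕ) := by push_cast; ring
    rw [e0] at h0
    rw [e1] at h1
    simp only [eval_mul, eval_sub, eval_C, eval_X, h0, h1] at h
    have h2 := congrArg (eval x) (laguerrePoly_add_two α n)
    have h3 := congrArg (eval x) (laguerrePoly_shift α n)
    have h4 := congrArg (eval x) (laguerrePoly_shift (α + 1) n)
    have h5 := congrArg (eval x) (laguerrePoly_succ α (n + 1))
    have h6 := congrArg (eval x) (laguerrePoly_succ (α + 1) n)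
    rw [show α + 1 + 1 = α + 2 by ring] at h4 h6
    simp only [eval_mul, eval_sub, eval_add, eval_C, eval_X, Nat.cast_add, Nat.cast_one,
      Nat.cast_ofNat] at h h2 h3 h4 h5 h6
    have : ((n : ℝ) + 2) ≠ 0 := by positivity
    apply mul_left_cancel₀ this
    push_cast
    have h7 : (n + 1 + 1 + α) * ((laguerrePoly (α + 1) (n + 1)).eval x -
      (laguerrePoly α (n + 1)).eval x - (laguerrePoly (α + 1) n).eval x) = 0 := by
      rw [h3]; ring
    linear_combination h - h5 - h6 + h7

theorem wronskian_charlier_pos {x : ℝ} (hx : 0 < x) (n : ℕ) (y : ℝ) :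
    0 < (charlier x (n + 1)).derivative.eval y * (charlier x n).eval y -
      (charlier x (n + 1)).eval y * (charlier x n).derivative.eval y := by
  induction n with
  | zero => simp [charlier]
  | succ n ih =>
    have h0 := congrArg (eval y) (charlier_add_two x n)
    have h1 := congrArg (fun p => eval y (derivative p)) (charlier_add_two x n)
    simp only [derivative_mul, derivative_sub, derivative_C, derivative_X, eval_mul, eval_sub,
      eval_add, eval_C, eval_X, zero_mul, zero_add, sub_zero, one_mul] at h0 h1
    have hn : (0 : ℝ) < n + 2 := by positivity
    refine pos_of_mul_pos_right (a := (n : ℝ) + 2) ?_ hn.le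
    have := mul_pos hx ih
    have := sq_nonneg ((charlier x (n + 1)).eval y)
    have key : ((n : ℝ) + 2) * ((charlier x (n + 1 + 1)).derivative.eval y *
        (charlier x (n + 1)).eval y - (charlier x (n + 1 + 1)).eval y *
        (charlier x (n + 1)).derivative.eval y) = (charlier x (n + 1)).eval y ^ 2 +
        x * ((charlier x (n + 1)).derivative.eval y * (charlier x n).eval y -
      (charlier x (n + 1)).eval y * (charlier x n).derivative.eval y) := by
      linear_combination (charlier x (n + 1)).eval y * h1 -
        (charlier x (n + 1)).derivative.eval y * h0
    rw [key]
    positivity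

theorem eval_charlier_add_one (x y : ℝ) (n : ℕ) : (charlier x (n + 1)).eval (y + 1) =
    (charlier x (n + 1)).eval y + (charlier x n).eval y := by
  have h1 := eval_charlier x (y - n) (n + 1)
  have h2 := eval_charlier x (y - n - 1) (n + 1)
  have h3 := eval_charlier x (y - n) n
  have h4 := congrArg (eval x) (laguerrePoly_shift (y - n - 1) n)
  rw [show y - n + (n + 1 : ℕ) = y + 1 by push_cast; ring] at h1
  rw [show y - n - 1 + (n + 1 : ℕ) = y by push_cast; ring] at h2
  rw [sub_add_cancel] at h3
  rw [sub_add_cancel, eval_add] at h4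
  rw [h1, h2, h3, h4]

theorem charlier_derivative_mul_pos {x : ℝ} (hx : 0 < x) (n : ℕ) (z : ℝ)
    (hz : (charlier x (n + 1)).eval z = 0) :
    0 < (charlier x (n + 1)).derivative.eval z * (charlier x (n + 1)).eval (z + 1) := by
  have := wronskian_charlier_pos hx n z
  rw [eval_charlier_add_one, hz, zero_add]
  simpa [hz] using this

theorem eval_mul_pos_of_mem_Icc {f : ℝ[X]}
    (h : ∀ z, f.eval z = 0 → 0 < f.derivative.eval z * f.eval (z + 1)) {a s : ℝ}
    (ha : 0 < f.eval a * f.eval (a + 1)) (has : a ≤ s) (hsa : s ≤ a + 1) :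
    0 < f.eval a * f.eval s := by
  rcases pos_and_pos_or_neg_and_neg_of_mul_pos ha with ⟨h0, h1⟩ | ⟨h0, h1⟩
  · exact mul_pos h0 (eval_pos_of_mem_Icc h h0 h1 has hsa)
  · have := eval_pos_of_mem_Icc (f := -f) (a := a) (s := s) (by simpa using h)
      (by simpa using h0) (by simpa using h1) has hsa
    exact mul_pos_of_neg_of_neg h0 (by simpa using this)

theorem derivative_mul_laguerrePoly_neg {α t x : ℝ} (hα : -1 < α) (ht0 : 0 ≤ t) (ht2 : t ≤ 2)
    (n : ℕ) (hx : (laguerrePoly α (n + 2)).eval x = 0) :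
    (laguerrePoly α (n + 2)).derivative.eval x * (laguerrePoly (α + t) (n + 1)).eval x < 0 := by
  have hx0 : 0 < x := by
    by_contra! h
    have := laguerre_pos_of_nonpos hα (n + 2) h
    rw [← eval_laguerrePoly, hx] at this
    exact this.false
  have h := charlier_derivative_mul_pos hx0 n
  have hf := fun s => eval_charlier x (α + s) (n + 1)
  have hn : (0 : ℝ) ≤ n := n.cast_nonneg
  set f := charlier x (n + 1)
  set a := α + (n + 1 : ℕ) with ha
  have ha0 : f.eval a = (laguerrePoly α (n + 1)).eval x := by simpa [ha] using hf 0
  have ha1 : f.eval (a + 1) = (laguerrePoly (α + 1) (n + 1)).eval x := by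
    rw [← hf, ha]; ring_nf
  have ha2 : f.eval (a + 1 + 1) = (laguerrePoly (α + 2) (n + 1)).eval x := by
    rw [← hf, ha]; ring_nf
  have hat : f.eval (a + t) = (laguerrePoly (α + t) (n + 1)).eval x := by
    rw [← hf, ha]; ring_nf
  have e1 := congrArg (eval x) (laguerrePoly_succ α (n + 1))
  have e2 := congrArg (eval x) (laguerrePoly_succ (α + 1) (n + 1))
  have e3 := congrArg (eval x) (laguerrePoly_shift α (n + 1))
  rw [show α + 1 + 1 = α + 2 by ring] at e2
  simp only [eval_mul, eval_sub, eval_add, eval_C, eval_X, ← ha0, ← ha1, ← ha2, hx,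
    Nat.cast_add, Nat.cast_one] at e1 e2 e3
  rw [e3] at e2
  have r1 : x * f.eval (a + 1) = (n + 2 + α) * f.eval a := by linear_combination e1
  have r2 : x * f.eval (a + 1 + 1) = (α + 1) * f.eval (a + 1) := by linear_combination e2
  have hne : f.eval (a + 1) ≠ 0 := by
    intro h1
    have h0 : f.eval a = 0 := by
      rw [h1, mul_zero] at r1
      exact (mul_eq_zero.1 r1.symm).resolve_left (by linarith)
    simpa [h1] using h a h0
  have hsq : 0 < f.eval (a + 1) * f.eval (a + 1) := mul_self_pos.2 hne
  have p01 : 0 < f.eval a * f.eval (a + 1) := by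
    refine pos_of_mul_pos_right (a := (n : ℝ) + 2 + α) ?_ (by linarith)
    rw [← mul_assoc, ← r1, mul_assoc]
    exact mul_pos hx0 hsq
  have p12 : 0 < f.eval (a + 1) * f.eval (a + 1 + 1) := by
    refine pos_of_mul_pos_right (a := x) ?_ hx0.le
    rw [mul_left_comm, r2, mul_left_comm]
    exact mul_pos (by linarith) hsq
  have key : 0 < f.eval (a + 1) * f.eval (a + t) := by
    rcases le_total t 1 with h1 | h1
    · have := eval_mul_pos_of_mem_Icc h p01 (s := a + t) (by linarith) (by linarith)
      refine pos_of_mul_pos_right (a := f.eval a * f.eval a) ?_ (mul_self_nonneg _)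
      calc 0 < (f.eval a * f.eval (a + 1)) * (f.eval a * f.eval (a + t)) := mul_pos p01 this
        _ = _ := by ring
    · exact eval_mul_pos_of_mem_Icc h p12 (by linarith) (by linarith)
  rw [derivative_laguerrePoly, eval_neg, ← ha1, ← hat]
  linarith

theorem im_aeval_laguerrePoly_neg {α : ℝ} (hα : -1 < α) {z : ℂ} (hz : 0 < z.im) (n : ℕ) :
    (aeval z (laguerrePoly α (n + 1)) * (starRingEnd ℂ) (aeval z (laguerrePoly α n))).im < 0 := by
  induction n with
  | zero => simpa [laguerrePoly_zero, laguerrePoly_one] using hz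
  | succ n ih =>
    have h := congrArg (aeval z) (laguerrePoly_add_two α n)
    simp only [map_mul, map_sub, aeval_C, aeval_X, Complex.coe_algebraMap] at h
    set u := aeval z (laguerrePoly α n)
    set v := aeval z (laguerrePoly α (n + 1))
    set w := aeval z (laguerrePoly α (n + 2))
    have hre := congrArg Complex.re h
    have him := congrArg Complex.im h
    simp only [Complex.mul_re, Complex.mul_im, Complex.sub_re, Complex.sub_im, Complex.ofReal_re,
      Complex.ofReal_im, zero_mul, sub_zero, add_zero, zero_sub] at hre him
    simp only [Complex.mul_im, Complex.conj_re, Complex.conj_im] at ih ⊢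
    have hn : (0 : ℝ) ≤ n := n.cast_nonneg
    have hv : 0 < v.re ^ 2 + v.im ^ 2 := by
      by_contra! hv
      have h1 : v.re = 0 := by nlinarith [sq_nonneg v.re, sq_nonneg v.im]
      have h2 : v.im = 0 := by nlinarith [sq_nonneg v.re, sq_nonneg v.im]
      simp [h1, h2] at ih
    have key : ((n : ℝ) + 2) * (w.re * -v.im + w.im * v.re) =
        -(z.im * (v.re ^ 2 + v.im ^ 2)) + (n + 1 + α) * (v.re * -u.im + v.im * u.re) := by
      linear_combination (-v.im) * hre + v.re * him
    have h1 := mul_pos hz hv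
    have h2 := mul_neg_of_pos_of_neg (show 0 < (n : ℝ) + 1 + α by linarith) ih
    exact neg_of_mul_neg_right (a := (n : ℝ) + 2) (by rw [key]; linarith) (by linarith)

theorem splits_laguerrePoly {α : ℝ} (hα : -1 < α) (n : ℕ) : (laguerrePoly α n).Splits := by
  rcases n with _ | n
  · simp [laguerrePoly_zero]
  have hne : ∀ z : ℂ, 0 < z.im → aeval z (laguerrePoly α (n + 1)) ≠ 0 := fun z hz h => by
    simpa [h] using im_aeval_laguerrePoly_neg hα hz n
  refine Splits.of_splits_map (algebraMap ℝ ℂ) (IsAlgClosed.splits _) fun z hz => ?_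
  have hz0 : aeval z (laguerrePoly α (n + 1)) = 0 := by
    rw [aeval_def, ← eval_map]
    exact (mem_roots'.1 hz).2
  refine ⟨z.re, ?_⟩
  rcases lt_trichotomy z.im 0 with h | h | h
  · refine absurd ?_ (hne ((starRingEnd ℂ) z) (by simpa using h))
    rw [aeval_conj, hz0, map_zero]
  · exact Complex.ext rfl (by simpa using h.symm)
  · exact absurd hz0 (hne z h)

theorem natDegree_laguerrePoly (α : ℝ) (n : ℕ) : (laguerrePoly α n).natDegree = n := by
  refine natDegree_eq_of_le_of_coeff_ne_zero ?_ ?_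
  · exact natDegree_le_iff_coeff_eq_zero.2 fun k hk => by
      rw [coeff_laguerrePoly, laguerreCoeff_of_lt _ hk]
  · have h := laguerreCoeff_add α n 0
    rw [add_zero] at h
    rw [coeff_laguerrePoly, h]
    simp [Nat.factorial_ne_zero]

/-- If `q / p` has negative residues at the zeros of the split polynomial `p`, then it is injective
on every interval free of zeros of `p`, so `p + b q` has at most one root there. -/
theorem not_two_roots_of_splits {p q : ℝ[X]} (hp : p.Splits) (hdeg : q.degree < p.degree)
    (h : ∀ z, p.eval z = 0 → p.derivative.eval z * q.eval z < 0) {b r u v : ℝ}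
    (hr : p.eval r = 0) (huv : u < v) (hne : ∀ z ∈ Set.Icc u v, p.eval z ≠ 0)
    (hu : p.eval u + b * q.eval u = 0) : p.eval v + b * q.eval v ≠ 0 := by
  intro hv
  classical
  have hp0 : p ≠ 0 := by
    rintro rfl
    simp at hdeg
  have hnodup : p.roots.Nodup := by
    refine Multiset.nodup_iff_count_le_one.2 fun z => ?_
    rw [count_roots]
    by_contra! hz
    obtain ⟨h1, h2⟩ := (one_lt_rootMultiplicity_iff_isRoot hp0).1 hz
    have := h z h1
    rw [IsRoot.def.1 h2] at this
    simp at this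
  set s := p.roots.toFinset with hs
  have hmem : ∀ z, z ∈ s ↔ p.eval z = 0 := fun z => by simp [hs, hp0]
  have hcard : p.degree = s.card := by
    rw [hp.degree_eq_card_roots hp0, hs, Multiset.toFinset_card_of_nodup hnodup]
  set l := p.leadingCoeff
  have hl : l ≠ 0 := leadingCoeff_ne_zero.2 hp0
  have hpN : p = C l * Lagrange.nodal s id := by
    conv_lhs => rw [hp.eq_prod_roots]
    rw [Lagrange.nodal, Finset.prod, hs, Multiset.toFinset_val, hnodup.dedup]
    rfl
  have hq := Lagrange.eq_interpolate_of_eval_eq (s := s) (v := id) (fun z => q.eval z)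
    (Set.injOn_id _) (hcard ▸ hdeg) (fun _ _ => rfl)
  set N := Lagrange.nodal s (id : ℝ → ℝ)
  have hsum : ∀ y, p.eval y ≠ 0 → p.eval y + b * q.eval y = 0 →
      b * ∑ i ∈ s, Lagrange.nodalWeight s id i * (y - i)⁻¹ * q.eval i = -l := fun y hy hy0 => by
    have hNy : N.eval y ≠ 0 := fun h0 => hy (by rw [hpN, eval_mul, h0, mul_zero])
    have hqy : q.eval y = N.eval y *
        ∑ i ∈ s, Lagrange.nodalWeight s id i * (y - i)⁻¹ * q.eval i := by
      conv_lhs => rw [hq]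
      exact Lagrange.eval_interpolate_not_at_node _ fun i hi h0 => hy (by
        rw [h0]; exact (hmem i).1 hi)
    have hpy : p.eval y = l * N.eval y := by rw [hpN, eval_mul, eval_C]
    rw [hqy, hpy] at hy0
    apply mul_left_cancel₀ hNy
    linear_combination hy0
  have hu' := hne u ⟨le_rfl, huv.le⟩
  have hv' := hne v ⟨huv.le, le_rfl⟩
  have hb : b ≠ 0 := by
    rintro rfl
    exact hu' (by simpa using hu)
  have heq := mul_left_cancel₀ hb ((hsum u hu' hu).trans (hsum v hv' hv).symm)
  have hlt : ∑ i ∈ s, l * (Lagrange.nodalWeight s id i * (u - i)⁻¹ * q.eval i) <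
      ∑ i ∈ s, l * (Lagrange.nodalWeight s id i * (v - i)⁻¹ * q.eval i) := by
    refine Finset.sum_lt_sum_of_nonempty ⟨r, (hmem r).2 hr⟩ fun i hi => ?_
    have hi0 := (hmem i).1 hi
    have hw : Lagrange.nodalWeight s id i = (N.derivative.eval i)⁻¹ := by
      simpa using Lagrange.nodalWeight_eq_eval_derivative_nodal (v := (id : ℝ → ℝ)) hi
    have hsgn := h i hi0
    have hpd : p.derivative.eval i = l * N.derivative.eval i := by
      rw [hpN, derivative_C_mul, eval_mul, eval_C]
    rw [hpd] at hsgn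
    have hNd : N.derivative.eval i ≠ 0 := fun h0 => by simp [h0] at hsgn
    have hcoef : l * (N.derivative.eval i)⁻¹ * q.eval i < 0 := by
      have hsq : 0 < (N.derivative.eval i)⁻¹ * (N.derivative.eval i)⁻¹ :=
        mul_self_pos.2 (inv_ne_zero hNd)
      have := mul_neg_of_pos_of_neg hsq hsgn
      calc _ = (N.derivative.eval i)⁻¹ * (N.derivative.eval i)⁻¹ *
            (l * N.derivative.eval i * q.eval i) := by field_simp
        _ < 0 := this
    have hinv : (v - i)⁻¹ < (u - i)⁻¹ := by
      rcases lt_or_ge i u with hiu | hiu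
      · exact inv_strictAnti₀ (by linarith) (by linarith)
      · have hvi : v < i := by
          by_contra! hvi
          exact hne i ⟨hiu, hvi⟩ hi0
        exact (inv_lt_inv_of_neg (by linarith) (by linarith)).2 (by linarith)
    rw [hw]
    have := mul_lt_mul_of_neg_left hinv hcoef
    linarith
  rw [← Finset.mul_sum, ← Finset.mul_sum, heq] at hlt
  exact hlt.false

end

theorem S_sign_change_at_zeros_of_L_n (α t b : ℝ) (hα : α > -1) (ht0 : 0 < t)
    (ht2 : t ≤ 2) (hb : b ≠ 0) (n : ℕ) (hn : 2 ≤ n)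
    (S : ℝ → ℝ) (hS : ∀ x, S x = laguerre α n x + b * laguerre (α + t) (n - 1) x)
    (x x' : ℝ) (hlt : x < x') (hx : laguerre α n x = 0) (hx' : laguerre α n x' = 0)
    (hcons : ∀ u ∈ Set.Ioo x x', laguerre α n u ≠ 0) :
    S x * S x' < 0 ∧ ∃! z, z ∈ Set.Ioo x x' ∧ S z = 0 := by
  obtain ⟨m, rfl⟩ : ∃ m, n = m + 2 := ⟨n - 2, by omega⟩
  rw [show m + 2 - 1 = m + 1 by omega] at hS
  simp only [← eval_laguerrePoly] at hS hx hx' hcons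
  have hsgn : ∀ z, (laguerrePoly α (m + 2)).eval z = 0 →
      (laguerrePoly α (m + 2)).derivative.eval z * (laguerrePoly (α + t) (m + 1)).eval z < 0 :=
    fun z hz => derivative_mul_laguerrePoly_neg hα ht0.le ht2 m hz
  have hsplits := splits_laguerrePoly hα (m + 2)
  have hdeg : (laguerrePoly (α + t) (m + 1)).degree < (laguerrePoly α (m + 2)).degree :=
    Polynomial.degree_lt_degree (by simp [natDegree_laguerrePoly])
  set p := laguerrePoly α (m + 2)
  set q := laguerrePoly (α + t) (m + 1)
  have hqx := hsgn x hx
  have hqx' := hsgn x' hx'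
  have hpp := derivative_mul_derivative_neg hlt hx hx' (left_ne_zero_of_mul hqx.ne)
    (left_ne_zero_of_mul hqx'.ne) hcons
  have hqq : q.eval x * q.eval x' < 0 := by
    by_contra! h0
    have h1 := mul_pos_of_neg_of_neg hqx hqx'
    have h2 := mul_nonpos_of_nonpos_of_nonneg hpp.le h0
    linarith
  have hSS : S x * S x' < 0 := by
    rw [hS, hS, hx, hx']
    have := mul_neg_of_pos_of_neg (mul_self_pos.2 hb) hqq
    linarith
  refine ⟨hSS, ?_⟩
  have hcont : Continuous S := by
    rw [funext hS]
    fun_prop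
  have hex : ∃ z ∈ Set.Ioo x x', S z = 0 := by
    rcases mul_neg_iff.1 hSS with ⟨h1, h2⟩ | ⟨h1, h2⟩
    · exact intermediate_value_Ioo' hlt.le hcont.continuousOn ⟨h2, h1⟩
    · exact intermediate_value_Ioo hlt.le hcont.continuousOn ⟨h1, h2⟩
  obtain ⟨z, hz, hz0⟩ := hex
  have huniq : ∀ u v, u ∈ Set.Ioo x x' → v ∈ Set.Ioo x x' → S u = 0 → u < v → S v ≠ 0 := by
    intro u v hu hv hu0 huv
    rw [hS] at hu0 ⊢
    exact not_two_roots_of_splits hsplits hdeg hsgn hx huv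
      (fun y hy => hcons y ⟨hu.1.trans_le hy.1, hy.2.trans_lt hv.2⟩) hu0
  refine ⟨z, ⟨hz, hz0⟩, fun w ⟨hw, hw0⟩ => ?_⟩
  rcases lt_trichotomy w z with h | h | h
  · exact absurd hz0 (huniq w z hw hz hw0 h)
  · exact h
  · exact absurd hw0 (huniq z w hz hw hz0 h)
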